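/- arXiv:0911.3141 — 4 statements merged into one kernel-verified Lean document; each statement's English description precedes it below -/
import Mathlib

section
/- Let n ≥ 1, σ ∈ (0,1), and s > n/2 + 4σ. There exists a constant C = C(n,s,σ) > 0 such that for all ε > 0, t > 0 and all Schwartz functions f : ℝⁿ → ℂ one has, for every x ∈ ℝⁿ, |S_ε(t)f(x) − f(x)| ≤ C ε^σ t^σ ( ‖f‖_{Ḣ^s} + ‖f‖_{Ḣ^{4σ}} ). (The L^∞ estimate of Lemma 3.3.) -/
/-!
By Fourier inversion `S_ε(t)f − f` is bounded pointwise by `∫ |e^{-ε|ξ|⁴t} − 1| |f̂(ξ)| dξ`.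
The elementary inequality `1 − e^{-a} ≤ a^σ` (`one_sub_exp_neg_le_rpow`), with `a = ε|ξ|⁴t`,
extracts the factor `ε^σ t^σ` and leaves `∫ |ξ|^{4σ} |f̂(ξ)| dξ`. With `r = s − 4σ > n/2`, this is
controlled in `integral_rpow_mul_norm_le` by the Cauchy–Schwarz inequality applied to
`(1+|ξ|)^{-r}`, which is square integrable on `ℝⁿ`, and `(1+|ξ|)^r |ξ|^{4σ} |f̂(ξ)|`, whose square
is at most `2^{2r} (|ξ|^{8σ} + |ξ|^{2s}) |f̂(ξ)|²`.
-/

open MeasureTheory FourierTransform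

/-- The homogeneous Sobolev norm `‖f‖_{Ḣ^r} = (∫ |ξ|^{2r} |f̂(ξ)|² dξ)^{1/2}`
of a Schwartz function. -/
noncomputable def homSobNorm {n : ℕ} (f : SchwartzMap (EuclideanSpace ℝ (Fin n)) ℂ)
    (r : ℝ) : ℝ :=
  Real.sqrt (∫ ξ : EuclideanSpace ℝ (Fin n), ‖ξ‖ ^ (2 * r) * ‖𝓕 (⇑f) ξ‖ ^ 2)

lemma one_sub_exp_neg_le_rpow {σ a : ℝ} (hσ : σ ∈ Set.Ioo (0:ℝ) 1) (ha : 0 ≤ a) :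
    1 - Real.exp (-a) ≤ a ^ σ := by
  rcases le_total a 1 with h | h
  · have h1 : a ≤ a ^ σ := by
      rcases ha.eq_or_lt with rfl | h0
      · exact Real.rpow_nonneg le_rfl _
      · simpa using Real.rpow_le_rpow_of_exponent_ge h0 h hσ.2.le
    linarith [Real.one_sub_le_exp_neg a]
  · linarith [Real.one_le_rpow h hσ.1.le, Real.exp_pos (-a)]

lemma rpow_le_one_add_pow {a p : ℝ} (ha : 0 ≤ a) (hp : 0 ≤ p) :
    a ^ p ≤ 1 + a ^ ⌈p⌉₊ := by
  rcases le_total a 1 with h | h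
  · linarith [Real.rpow_le_one ha h hp, pow_nonneg ha ⌈p⌉₊]
  · have := Real.rpow_le_rpow_of_exponent_le h (Nat.le_ceil p)
    rw [Real.rpow_natCast] at this
    linarith

lemma one_add_rpow_le {a q : ℝ} (ha : 0 ≤ a) (hq : 0 ≤ q) :
    (1 + a) ^ q ≤ 2 ^ q * (1 + a ^ q) := by
  have h2 : (0:ℝ) ≤ 2 ^ q := by positivity
  have h3 : 0 ≤ a ^ q := by positivity
  rcases le_total a 1 with h | h
  · have := Real.rpow_le_rpow (by linarith) (show 1 + a ≤ 2 by linarith) hq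
    nlinarith
  · have := Real.rpow_le_rpow (by linarith) (show 1 + a ≤ 2 * a by linarith) hq
    rw [Real.mul_rpow (by norm_num) ha] at this
    nlinarith

section

variable {n : ℕ}

local notation "E" => EuclideanSpace ℝ (Fin n)

lemma integrable_rpow_mul_norm (F : SchwartzMap E ℂ) {p : ℝ} (hp : 0 ≤ p) :
    Integrable (fun ξ : E => ‖ξ‖ ^ p * ‖F ξ‖) := by
  have h := (F.integrable_pow_mul volume 0).add (F.integrable_pow_mul volume ⌈p⌉₊)
  have hF : Continuous F := F.continuous
  refine h.mono' ?_ (.of_forall fun ξ => ?_)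
  · exact (Measurable.mul (by fun_prop) (by fun_prop)).aestronglyMeasurable
  · rw [Real.norm_of_nonneg (by positivity)]
    have := rpow_le_one_add_pow (norm_nonneg ξ) hp
    have := mul_le_mul_of_nonneg_right this (norm_nonneg (F ξ))
    simp only [Pi.add_apply, pow_zero]
    linarith

lemma integrable_rpow_mul_norm_sq (F : SchwartzMap E ℂ) {p : ℝ} (hp : 0 ≤ p) :
    Integrable (fun ξ : E => ‖ξ‖ ^ p * ‖F ξ‖ ^ 2) := by
  have hF : Continuous F := F.continuous
  refine ((integrable_rpow_mul_norm F hp).const_mul (SchwartzMap.seminorm ℝ 0 0 F)).mono' ?_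
    (.of_forall fun ξ => ?_)
  · exact (Measurable.mul (by fun_prop) (by fun_prop)).aestronglyMeasurable
  · rw [Real.norm_of_nonneg (by positivity)]
    have h1 := SchwartzMap.norm_le_seminorm ℝ F ξ
    have h2 : 0 ≤ ‖ξ‖ ^ p * ‖F ξ‖ := by positivity
    nlinarith [mul_le_mul_of_nonneg_left h1 h2]

/-- The Cauchy–Schwarz step. The constant depends only on `n`, `r`, being built from
`∫ (1 + |ξ|)^{-2r} dξ`, which is finite for `r > n / 2`. -/
lemma integral_rpow_mul_norm_le {p r : ℝ} (hp : 0 < p) (hr : (n : ℝ) / 2 < r)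
    (F : SchwartzMap E ℂ) :
    ∫ ξ : E, ‖ξ‖ ^ p * ‖F ξ‖ ≤
      √(∫ ξ : E, (1 + ‖ξ‖) ^ (-(2 * r))) * √(2 ^ (2 * r)) *
        (√(∫ ξ : E, ‖ξ‖ ^ (2 * (p + r)) * ‖F ξ‖ ^ 2) + √(∫ ξ : E, ‖ξ‖ ^ (2 * p) * ‖F ξ‖ ^ 2)) := by
  have hr0 : 0 < r := lt_of_le_of_lt (by positivity) hr
  have hF : Continuous F := F.continuous
  set u : E → ℝ := fun ξ => (1 + ‖ξ‖) ^ (-r) with hu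
  set v : E → ℝ := fun ξ => (1 + ‖ξ‖) ^ r * (‖ξ‖ ^ p * ‖F ξ‖) with hv
  have hu0 : ∀ ξ, 0 ≤ u ξ := fun ξ => by positivity
  have hv0 : ∀ ξ, 0 ≤ v ξ := fun ξ => by positivity
  have hum : AEStronglyMeasurable u volume :=
    Measurable.aestronglyMeasurable (by fun_prop)
  have hvm : AEStronglyMeasurable v volume :=
    (Measurable.mul (by fun_prop) (Measurable.mul (by fun_prop)
      (by fun_prop))).aestronglyMeasurable
  have huv : ∀ ξ, u ξ * v ξ = ‖ξ‖ ^ p * ‖F ξ‖ := fun ξ => by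
    have : 0 < 1 + ‖ξ‖ := by positivity
    simp only [hu, hv]
    rw [← mul_assoc, ← Real.rpow_add this]
    simp
  have hu2 : ∀ ξ, u ξ ^ 2 = (1 + ‖ξ‖) ^ (-(2 * r)) := fun ξ => by
    have : 0 ≤ 1 + ‖ξ‖ := by positivity
    simp only [hu]
    rw [← Real.rpow_mul_natCast this]
    congr 1
    push_cast
    ring
  have hv2 : ∀ ξ, v ξ ^ 2 ≤ 2 ^ (2 * r) *
      (‖ξ‖ ^ (2 * (p + r)) * ‖F ξ‖ ^ 2 + ‖ξ‖ ^ (2 * p) * ‖F ξ‖ ^ 2) := fun ξ => by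
    have h1 : 0 ≤ 1 + ‖ξ‖ := by positivity
    have e1 : v ξ ^ 2 = (1 + ‖ξ‖) ^ (2 * r) * (‖ξ‖ ^ (2 * p) * ‖F ξ‖ ^ 2) := by
      simp only [hv]
      rw [mul_pow, mul_pow, ← Real.rpow_mul_natCast h1, ← Real.rpow_mul_natCast (norm_nonneg ξ)]
      push_cast
      rw [mul_comm r, mul_comm p]
    have e2 : ‖ξ‖ ^ (2 * (p + r)) = ‖ξ‖ ^ (2 * r) * ‖ξ‖ ^ (2 * p) := by
      rw [← Real.rpow_add' (norm_nonneg ξ) (by positivity)]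
      congr 1
      ring
    rw [e1, e2]
    calc _ ≤ 2 ^ (2 * r) * (1 + ‖ξ‖ ^ (2 * r)) * (‖ξ‖ ^ (2 * p) * ‖F ξ‖ ^ 2) := by
          gcongr
          exact one_add_rpow_le (norm_nonneg ξ) (by positivity)
      _ = _ := by ring
  have hA := integrable_rpow_mul_norm_sq F (p := 2 * (p + r)) (by positivity)
  have hB := integrable_rpow_mul_norm_sq F (p := 2 * p) (by positivity)
  have hui : Integrable (fun ξ => u ξ ^ 2) := by
    simp only [hu2]
    apply integrable_one_add_norm
    rw [finrank_euclideanSpace_fin]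
    linarith
  have hvi : Integrable (fun ξ => v ξ ^ 2) :=
    ((hA.add hB).const_mul (2 ^ (2 * r))).mono' (hvm.pow 2)
      (.of_forall fun ξ => by
        rw [Real.norm_of_nonneg (by positivity)]
        exact hv2 ξ)
  have hCS := integral_mul_le_Lp_mul_Lq_of_nonneg (μ := volume) Real.HolderConjugate.two_two
    (.of_forall hu0) (.of_forall hv0)
    (by simpa using (memLp_two_iff_integrable_sq hum).2 hui)
    (by simpa using (memLp_two_iff_integrable_sq hvm).2 hvi)
  simp only [huv, Real.rpow_two, ← Real.sqrt_eq_rpow] at hCS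
  refine hCS.trans ?_
  rw [mul_assoc]
  simp only [hu2]
  gcongr
  have hvI : ∫ ξ, v ξ ^ 2 ≤ 2 ^ (2 * r) * ((∫ ξ : E, ‖ξ‖ ^ (2 * (p + r)) * ‖F ξ‖ ^ 2) +
      ∫ ξ : E, ‖ξ‖ ^ (2 * p) * ‖F ξ‖ ^ 2) := by
    rw [← integral_add hA hB, ← integral_const_mul]
    exact integral_mono hvi ((hA.add hB).const_mul _) hv2
  refine (Real.sqrt_le_sqrt hvI).trans ?_
  rw [Real.sqrt_mul (by positivity)]
  gcongr
  have ha : 0 ≤ ∫ ξ : E, ‖ξ‖ ^ (2 * (p + r)) * ‖F ξ‖ ^ 2 :=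
    integral_nonneg fun ξ => by positivity
  have hb : 0 ≤ ∫ ξ : E, ‖ξ‖ ^ (2 * p) * ‖F ξ‖ ^ 2 :=
    integral_nonneg fun ξ => by positivity
  rw [Real.sqrt_le_left (by positivity)]
  nlinarith [Real.sq_sqrt ha, Real.sq_sqrt hb,
    mul_nonneg (Real.sqrt_nonneg (∫ ξ : E, ‖ξ‖ ^ (2 * (p + r)) * ‖F ξ‖ ^ 2))
      (Real.sqrt_nonneg (∫ ξ : E, ‖ξ‖ ^ (2 * p) * ‖F ξ‖ ^ 2))]

lemma norm_le_integral_norm_fourier (h : SchwartzMap E ℂ) (x : E) :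
    ‖h x‖ ≤ ∫ ξ : E, ‖(𝓕 h : SchwartzMap E ℂ) ξ‖ := by
  have e : h x = 𝓕⁻ (⇑(𝓕 h : SchwartzMap E ℂ)) x := by
    rw [← SchwartzMap.fourierInv_coe, FourierTransform.fourierInv_fourier_eq]
  rw [e, Real.fourierInv_eq]
  refine (norm_integral_le_integral_norm _).trans_eq ?_
  simp_rw [Circle.norm_smul]

end

/-- **The `L^∞` estimate of Lemma 3.3**: for `0 < σ < 1` and `s > n/2 + 4σ`,
`|S_ε(t)f(x) − f(x)| ≤ C ε^σ t^σ (‖f‖_{Ḣ^s} + ‖f‖_{Ḣ^{4σ}})`, where `S_ε(t)f`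
is the Schwartz function whose Fourier transform is `ξ ↦ e^{-ε|ξ|⁴t} f̂(ξ)`. -/
theorem stmt2 (n : ℕ) (hn : 1 ≤ n) (σ s : ℝ) (hσ : σ ∈ Set.Ioo (0:ℝ) 1)
    (hs : (n : ℝ)/2 + 4 * σ < s) :
    ∃ C : ℝ, 0 < C ∧ ∀ (ε t : ℝ), 0 < ε → 0 < t →
      ∀ f g : SchwartzMap (EuclideanSpace ℝ (Fin n)) ℂ,
        (∀ ξ : EuclideanSpace ℝ (Fin n),
          𝓕 (⇑g) ξ = (Real.exp (-(ε * ‖ξ‖ ^ 4 * t)) : ℂ) * 𝓕 (⇑f) ξ) →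
        ∀ x : EuclideanSpace ℝ (Fin n),
          ‖g x - f x‖ ≤ C * ε ^ σ * t ^ σ * (homSobNorm f s + homSobNorm f (4 * σ)) := by
  have hσ0 := hσ.1
  -- Adding `1` makes the constant positive without computing the integral.
  refine ⟨√(∫ ξ : EuclideanSpace ℝ (Fin n), (1 + ‖ξ‖) ^ (-(2 * (s - 4 * σ)))) *
    √(2 ^ (2 * (s - 4 * σ))) + 1, by positivity, fun ε t hε ht f g hfg x => ?_⟩
  have hCS := integral_rpow_mul_norm_le (n := n) (p := 4 * σ) (r := s - 4 * σ) (by positivity)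
    (by linarith) (𝓕 f)
  rw [add_sub_cancel] at hCS
  change _ ≤ _ * (homSobNorm f s + homSobNorm f (4 * σ)) at hCS
  have hN : 0 ≤ homSobNorm f s + homSobNorm f (4 * σ) :=
    add_nonneg (Real.sqrt_nonneg _) (Real.sqrt_nonneg _)
  have hpt : ∀ ξ, ‖(𝓕 (g - f)) ξ‖ ≤ ε ^ σ * t ^ σ * (‖ξ‖ ^ (4 * σ) * ‖(𝓕 f) ξ‖) := fun ξ => by
    have e : (𝓕 (g - f)) ξ = ((Real.exp (-(ε * ‖ξ‖ ^ 4 * t)) - 1 : ℝ) : ℂ) * (𝓕 f) ξ := by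
      have h1 : (𝓕 g) ξ = (Real.exp (-(ε * ‖ξ‖ ^ 4 * t)) : ℂ) * (𝓕 f) ξ := hfg ξ
      rw [sub_eq_add_neg, FourierTransform.fourier_add, FourierTransform.fourier_neg,
        _root_.add_apply, _root_.neg_apply, h1]
      push_cast
      ring
    have ha : 0 ≤ ε * ‖ξ‖ ^ 4 * t := by positivity
    rw [e, norm_mul, Complex.norm_real, Real.norm_eq_abs, abs_sub_comm,
      abs_of_nonneg (by simpa using ha)]
    have h := one_sub_exp_neg_le_rpow hσ ha
    have e2 : (ε * ‖ξ‖ ^ 4 * t) ^ σ = ε ^ σ * t ^ σ * ‖ξ‖ ^ (4 * σ) := by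
      rw [Real.mul_rpow (by positivity) ht.le, Real.mul_rpow hε.le (by positivity),
        ← Real.rpow_natCast_mul (norm_nonneg ξ)]
      push_cast
      ring
    rw [e2] at h
    calc _ ≤ ε ^ σ * t ^ σ * ‖ξ‖ ^ (4 * σ) * ‖(𝓕 f) ξ‖ := by gcongr
      _ = _ := by ring
  calc ‖g x - f x‖ = ‖(g - f) x‖ := by simp
    _ ≤ ∫ ξ, ‖(𝓕 (g - f)) ξ‖ := norm_le_integral_norm_fourier _ x
    _ ≤ ∫ ξ, ε ^ σ * t ^ σ * (‖ξ‖ ^ (4 * σ) * ‖(𝓕 f) ξ‖) :=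
        integral_mono (𝓕 (g - f)).integrable.norm
          ((integrable_rpow_mul_norm (𝓕 f) (by positivity)).const_mul _) hpt
    _ = ε ^ σ * t ^ σ * ∫ ξ, ‖ξ‖ ^ (4 * σ) * ‖(𝓕 f) ξ‖ := integral_const_mul _ _
    _ ≤ ε ^ σ * t ^ σ * ((√(∫ ξ : EuclideanSpace ℝ (Fin n),
          (1 + ‖ξ‖) ^ (-(2 * (s - 4 * σ)))) * √(2 ^ (2 * (s - 4 * σ))) + 1) *
            (homSobNorm f s + homSobNorm f (4 * σ))) := by
        gcongr
        linarith
    _ = _ := by ring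
end

section
/- (Inequality (4.15) in the proof of Proposition 4.1.) Let n, m ≥ 1 and let p ≥ 2 be a real number. For every f ∈ C_c^∞(ℝⁿ, ℝᵐ) one has ∫_{ℝⁿ} |∇f|^p dx ≤ (n + p − 2) ∫_{ℝⁿ} |∇f|^{p−2} |∇²f| |f| dx, where |∇f| and |∇²f| denote the Euclidean (Frobenius) norms of the arrays of first and second partial derivatives of f, and |f| the Euclidean norm of f. -/
/-!
The inequality is an integration by parts applied to `|∇f|² = ∑_α ⟨∂_α f, ∂_α f⟩`, weighted by
`|∇f|^(p-2)`. Since `|∇f|^(p-2)` need not be differentiable where `∇f = 0`, it is replaced by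
`(|∇f|² + ε)^q` with `q = (p - 2) / 2` and `ε > 0`. The compactly supported `C¹` functions
`(|∇f|² + ε)^q ⟨f, ∂_α f⟩` have `∂_α`-derivatives of integral zero. Summed over `α`, these
derivatives are `(|∇f|² + ε)^q |∇f|²` plus

* `(|∇f|² + ε)^q ⟨f, ∑_α ∂_α ∂_α f⟩`, at most `n (|∇f|² + ε)^q |∇²f| |f|` in absolute value, and
* `2 q (|∇f|² + ε)^(q-1) ∑_{α,β} ⟨∂_β f, ∂_α ∂_β f⟩ ⟨f, ∂_α f⟩`, at most
  `(p - 2) (|∇f|² + ε)^(q-1) |∇f|² |∇²f| |f|` in absolute value by Cauchy–Schwarz over the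
  pairs `(α, β)`.

These pointwise bounds are `pointwise_bound`, and `regularized_ineq` is the integrated inequality
for `ε > 0`. All integrands are supported in `tsupport f` and jointly continuous in `(ε, x)` as
`q ≥ 0`, so both sides are continuous in `ε` and one may let `ε → 0⁺`.
-/

open MeasureTheory RealInnerProductSpace

/-- The Frobenius norm `|∇f(x)| = (Σ_{α,a} (∂_α f^a(x))²)^{1/2}` of the array of
first partial derivatives of `f : ℝⁿ → ℝᵐ` at `x`. -/
noncomputable def frobGrad1 {n m : ℕ}
    (f : EuclideanSpace ℝ (Fin n) → EuclideanSpace ℝ (Fin m))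
    (x : EuclideanSpace ℝ (Fin n)) : ℝ :=
  Real.sqrt (∑ α : Fin n, ∑ a : Fin m,
    ⟪iteratedFDeriv ℝ 1 f x (fun _ => EuclideanSpace.single α (1:ℝ)),
      EuclideanSpace.single a (1:ℝ)⟫ ^ 2)

/-- The Frobenius norm `|∇²f(x)| = (Σ_{α,β,a} (∂_α ∂_β f^a(x))²)^{1/2}` of the
array of second partial derivatives of `f : ℝⁿ → ℝᵐ` at `x`. -/
noncomputable def frobGrad2 {n m : ℕ}
    (f : EuclideanSpace ℝ (Fin n) → EuclideanSpace ℝ (Fin m))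
    (x : EuclideanSpace ℝ (Fin n)) : ℝ :=
  Real.sqrt (∑ α : Fin n, ∑ β : Fin n, ∑ a : Fin m,
    ⟪iteratedFDeriv ℝ 2 f x
        ![EuclideanSpace.single α (1:ℝ), EuclideanSpace.single β (1:ℝ)],
      EuclideanSpace.single a (1:ℝ)⟫ ^ 2)

open Filter Topology

/-! ### Pointwise Cauchy–Schwarz estimates -/

section Pointwise

variable {F : Type*} [NormedAddCommGroup F] [InnerProductSpace ℝ F]

/-- Cauchy–Schwarz over pairs of indices, for the term that comes from differentiating the
weight. -/
lemma abs_sum_cross_le {n : ℕ} (d : Fin n → F) (h : Fin n → Fin n → F) (w : F) :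
    |∑ α, (∑ β, ⟪d β, h α β⟫) * ⟪w, d α⟫| ≤
      (∑ α, ‖d α‖ ^ 2) * Real.sqrt (∑ α, ∑ β, ‖h α β‖ ^ 2) * ‖w‖ := by
  have h1 : |∑ α, (∑ β, ⟪d β, h α β⟫) * ⟪w, d α⟫| ≤
      (∑ α, ∑ β, (‖d α‖ * ‖d β‖) * ‖h α β‖) * ‖w‖ := by
    refine (Finset.abs_sum_le_sum_abs _ _).trans ?_
    rw [Finset.sum_mul]
    refine Finset.sum_le_sum fun α _ => ?_
    rw [abs_mul]
    calc |∑ β, ⟪d β, h α β⟫| * |⟪w, d α⟫|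
        ≤ (∑ β, ‖d β‖ * ‖h α β‖) * (‖w‖ * ‖d α‖) := by
          gcongr
          · exact (Finset.abs_sum_le_sum_abs _ _).trans
              (Finset.sum_le_sum fun β _ => abs_real_inner_le_norm _ _)
          · exact abs_real_inner_le_norm _ _
      _ = (∑ β, (‖d α‖ * ‖d β‖) * ‖h α β‖) * ‖w‖ := by
          rw [Finset.sum_mul, Finset.sum_mul]
          exact Finset.sum_congr rfl fun β _ => by ring
  refine h1.trans (mul_le_mul_of_nonneg_right ?_ (norm_nonneg w))
  have h2 := Finset.sum_mul_sq_le_sq_mul_sq (Finset.univ : Finset (Fin n × Fin n))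
    (fun i => ‖d i.1‖ * ‖d i.2‖) (fun i => ‖h i.1 i.2‖)
  simp only [Fintype.sum_prod_type] at h2
  have h3 : ∑ α, ∑ β, (‖d α‖ * ‖d β‖) ^ 2 = (∑ α, ‖d α‖ ^ 2) ^ 2 := by
    simp only [mul_pow, sq (∑ α, ‖d α‖ ^ 2), Finset.sum_mul_sum]
  rw [h3] at h2
  have hS : 0 ≤ ∑ α, ‖d α‖ ^ 2 := by positivity
  refine le_of_sq_le_sq ?_ (by positivity)
  rw [mul_pow, Real.sq_sqrt (by positivity)]
  exact h2

lemma abs_sum_diag_le {n : ℕ} (h : Fin n → Fin n → F) (w : F) :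
    |∑ α, ⟪w, h α α⟫| ≤ n * Real.sqrt (∑ α, ∑ β, ‖h α β‖ ^ 2) * ‖w‖ := by
  have key : ∀ α, |⟪w, h α α⟫| ≤ Real.sqrt (∑ α, ∑ β, ‖h α β‖ ^ 2) * ‖w‖ := by
    intro α
    rw [mul_comm]
    refine (abs_real_inner_le_norm _ _).trans
      (mul_le_mul_of_nonneg_left (Real.le_sqrt_of_sq_le ?_) (norm_nonneg w))
    exact (Finset.single_le_sum (f := fun β => ‖h α β‖ ^ 2) (fun β _ => by positivity)
      (Finset.mem_univ α)).trans (Finset.single_le_sum (f := fun α => ∑ β, ‖h α β‖ ^ 2)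
        (fun β _ => by positivity) (Finset.mem_univ α))
  calc |∑ α, ⟪w, h α α⟫| ≤ ∑ α, |⟪w, h α α⟫| := Finset.abs_sum_le_sum_abs _ _
    _ ≤ ∑ _α : Fin n, Real.sqrt (∑ α, ∑ β, ‖h α β‖ ^ 2) * ‖w‖ :=
        Finset.sum_le_sum fun α _ => key α
    _ = _ := by simp [mul_assoc]

/-- With `d α = ∂_α f`, `h α β = ∂_α ∂_β f` and `w = f` at a point, the first sum on the right is
the divergence of the vector field `(|∇f|² + ε)^q ⟨f, ∂_α f⟩`. -/
lemma pointwise_bound {n : ℕ} (d : Fin n → F) (h : Fin n → Fin n → F) (w : F) {q ε : ℝ}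
    (hq : 0 ≤ q) (hε : 0 < ε) :
    ((∑ β, ‖d β‖ ^ 2) + ε) ^ q * ∑ β, ‖d β‖ ^ 2 ≤
      (∑ α, (((∑ β, ‖d β‖ ^ 2) + ε) ^ q * (⟪w, h α α⟫ + ‖d α‖ ^ 2) +
        (q * ((∑ β, ‖d β‖ ^ 2) + ε) ^ (q - 1) * (2 * ∑ β, ⟪d β, h α β⟫)) * ⟪w, d α⟫)) +
      (n + 2 * q) * (((∑ β, ‖d β‖ ^ 2) + ε) ^ q * Real.sqrt (∑ α, ∑ β, ‖h α β‖ ^ 2) * ‖w‖) := by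
  have h1 := neg_le_of_abs_le (abs_sum_diag_le h w)
  have h2 := neg_le_of_abs_le (abs_sum_cross_le d h w)
  set S := ∑ β, ‖d β‖ ^ 2 with hS
  set H := Real.sqrt (∑ α, ∑ β, ‖h α β‖ ^ 2)
  have hS0 : 0 ≤ S := by positivity
  have hH0 : 0 ≤ H := Real.sqrt_nonneg _
  have e : ∑ α, ((S + ε) ^ q * (⟪w, h α α⟫ + ‖d α‖ ^ 2) +
        (q * (S + ε) ^ (q - 1) * (2 * ∑ β, ⟪d β, h α β⟫)) * ⟪w, d α⟫) =
      (S + ε) ^ q * (∑ α, ⟪w, h α α⟫) + (S + ε) ^ q * S +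
        2 * q * (S + ε) ^ (q - 1) * ∑ α, (∑ β, ⟪d β, h α β⟫) * ⟪w, d α⟫ := by
    rw [hS, Finset.mul_sum, Finset.mul_sum, Finset.mul_sum, ← Finset.sum_add_distrib,
      ← Finset.sum_add_distrib]
    exact Finset.sum_congr rfl fun α _ => by ring
  rw [e]
  have hpos : 0 < S + ε := by positivity
  have hq1 : (S + ε) ^ (q - 1) * (S + ε) = (S + ε) ^ q := by
    rw [← Real.rpow_add_one hpos.ne', sub_add_cancel]
  have a1 := mul_le_mul_of_nonneg_left h1 (Real.rpow_nonneg hpos.le q)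
  have a2 := mul_le_mul_of_nonneg_left h2
    (show 0 ≤ 2 * q * (S + ε) ^ (q - 1) by positivity)
  have a3 : 2 * q * (S + ε) ^ (q - 1) * (S * H * ‖w‖) ≤
      2 * q * ((S + ε) ^ q * H * ‖w‖) := by
    rw [← hq1]
    have : 0 ≤ 2 * q * (S + ε) ^ (q - 1) * (ε * H * ‖w‖) := by positivity
    nlinarith
  linarith

end Pointwise

/-! ### Integration by parts with a regularized weight -/

section Calculus

variable {n : ℕ} {F : Type*} [NormedAddCommGroup F] [InnerProductSpace ℝ F]

/-- The partial derivative `∂_α f`. -/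
noncomputable def pd (f : EuclideanSpace ℝ (Fin n) → F) (α : Fin n)
    (x : EuclideanSpace ℝ (Fin n)) : F :=
  fderiv ℝ f x (EuclideanSpace.single α (1 : ℝ))

lemma contDiff_pd {f : EuclideanSpace ℝ (Fin n) → F} (hf : ContDiff ℝ (⊤ : ℕ∞) f) (α : Fin n) :
    ContDiff ℝ (⊤ : ℕ∞) (pd f α) :=
  (hf.fderiv_right (m := (⊤ : ℕ∞)) (by simp)).clm_apply contDiff_const

lemma integral_pd_eq_zero {u : EuclideanSpace ℝ (Fin n) → ℝ} (hu : ContDiff ℝ 1 u)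
    (hc : HasCompactSupport u) (α : Fin n) :
    Integrable (pd u α) ∧ ∫ x, pd u α x = 0 := by
  have hi : Integrable (pd u α) := by
    refine Continuous.integrable_of_hasCompactSupport ?_ (hc.fderiv_apply ℝ _)
    exact (hu.continuous_fderiv (by simp)).clm_apply continuous_const
  refine ⟨hi, ?_⟩
  have := integral_mul_fderiv_eq_neg_fderiv_mul_of_integrable (μ := volume)
    (f := fun _ : EuclideanSpace ℝ (Fin n) => (1 : ℝ)) (g := u)
    (v := EuclideanSpace.single α (1 : ℝ)) (by simp) (by simp only [one_mul]; exact hi)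
    (by simpa using hu.continuous.integrable_of_hasCompactSupport hc) (by simp)
    (fun x _ => hu.differentiable (by simp) x)
  simpa [pd] using this

variable {f : EuclideanSpace ℝ (Fin n) → F}

/-- `|∇f|²`, written through partial derivatives. -/
noncomputable def gradSq (f : EuclideanSpace ℝ (Fin n) → F) (x : EuclideanSpace ℝ (Fin n)) : ℝ :=
  ∑ β, ‖pd f β x‖ ^ 2

/-- `|∇²f|`, written through iterated partial derivatives. -/
noncomputable def hessNorm (f : EuclideanSpace ℝ (Fin n) → F)
    (x : EuclideanSpace ℝ (Fin n)) : ℝ :=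
  Real.sqrt (∑ α, ∑ β, ‖pd (pd f β) α x‖ ^ 2)

lemma gradSq_nonneg (f : EuclideanSpace ℝ (Fin n) → F) (x : EuclideanSpace ℝ (Fin n)) :
    0 ≤ gradSq f x := by
  unfold gradSq; positivity

lemma contDiff_gradSq (hf : ContDiff ℝ (⊤ : ℕ∞) f) : ContDiff ℝ (⊤ : ℕ∞) (gradSq f) :=
  ContDiff.sum fun β _ => (contDiff_pd hf β).norm_sq ℝ

lemma continuous_hessNorm (hf : ContDiff ℝ (⊤ : ℕ∞) f) : Continuous (hessNorm f) := by
  refine Real.continuous_sqrt.comp (continuous_finsetSum _ fun α _ =>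
    continuous_finsetSum _ fun β _ => ?_)
  exact (contDiff_pd (contDiff_pd hf β) α).continuous.norm.pow 2

lemma pd_weighted (hf : ContDiff ℝ (⊤ : ℕ∞) f) {q ε : ℝ} (hε : 0 < ε) (α : Fin n)
    (x : EuclideanSpace ℝ (Fin n)) :
    pd (fun y => (gradSq f y + ε) ^ q * ⟪f y, pd f α y⟫) α x =
      (gradSq f x + ε) ^ q * (⟪f x, pd (pd f α) α x⟫ + ‖pd f α x‖ ^ 2) +
        (q * (gradSq f x + ε) ^ (q - 1) * (2 * ∑ β, ⟪pd f β x, pd (pd f β) α x⟫)) *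
          ⟪f x, pd f α x⟫ := by
  have hpos : 0 < gradSq f x + ε := by have := gradSq_nonneg f x; positivity
  have hdf : HasFDerivAt f (fderiv ℝ f x) x := (hf.differentiable (by simp) x).hasFDerivAt
  have hd : ∀ β, HasFDerivAt (pd f β) (fderiv ℝ (pd f β) x) x := fun β =>
    ((contDiff_pd hf β).differentiable (by simp) x).hasFDerivAt
  have hG : HasFDerivAt (gradSq f) _ x := HasFDerivAt.fun_sum fun β _ => (hd β).norm_sq
  have hW := (hG.add_const ε).rpow_const (p := q) (Or.inl hpos.ne')
  have hu := hW.fun_mul (hdf.inner ℝ (hd α))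
  rw [pd, HasFDerivAt.fderiv hu]
  simp [pd, ← Finset.mul_sum, fderivInnerCLM_apply]
  ring

/-- The inequality with `|∇f|^(p-2)` replaced by the smooth weight `(|∇f|² + ε)^q`. -/
lemma regularized_ineq (hf : ContDiff ℝ (⊤ : ℕ∞) f) (hsupp : HasCompactSupport f) {q ε : ℝ}
    (hq : 0 ≤ q) (hε : 0 < ε) :
    ∫ x, (gradSq f x + ε) ^ q * gradSq f x ≤
      (n + 2 * q) * ∫ x, (gradSq f x + ε) ^ q * hessNorm f x * ‖f x‖ := by
  have hpos : ∀ x, gradSq f x + ε ≠ 0 := fun x => by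
    have := gradSq_nonneg f x; positivity
  have hGc := contDiff_gradSq hf
  have hw : ContDiff ℝ (⊤ : ℕ∞) fun x => (gradSq f x + ε) ^ q :=
    (hGc.add contDiff_const).rpow_const_of_ne hpos
  let u : Fin n → EuclideanSpace ℝ (Fin n) → ℝ := fun α y =>
    (gradSq f y + ε) ^ q * ⟪f y, pd f α y⟫
  have hu : ∀ α, Integrable (pd (u α) α) ∧ ∫ x, pd (u α) α x = 0 := fun α => by
    refine integral_pd_eq_zero ?_ ?_ α
    · exact (hw.mul (hf.inner ℝ (contDiff_pd hf α))).of_le (by exact_mod_cast le_top)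
    · refine hsupp.mono fun x hx => ?_
      contrapose! hx
      simp only [Function.mem_support, not_not] at hx
      simp [u, hx]
  have hi1 : Integrable fun x => (gradSq f x + ε) ^ q * gradSq f x := by
    refine (hw.continuous.mul hGc.continuous).integrable_of_hasCompactSupport ?_
    refine (hsupp.fderiv ℝ).mono fun x hx => ?_
    contrapose! hx
    simp only [Function.mem_support, not_not] at hx
    simp [gradSq, pd, hx]
  have hi2 : Integrable fun x => (gradSq f x + ε) ^ q * hessNorm f x * ‖f x‖ :=
    ((hw.continuous.mul (continuous_hessNorm hf)).mul
      hf.continuous.norm).integrable_of_hasCompactSupport hsupp.norm.mul_left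
  have hsum : Integrable fun x => ∑ α, pd (u α) α x := integrable_finsetSum _ fun α _ => (hu α).1
  calc ∫ x, (gradSq f x + ε) ^ q * gradSq f x
      ≤ ∫ x, ((∑ α, pd (u α) α x) +
          (n + 2 * q) * ((gradSq f x + ε) ^ q * hessNorm f x * ‖f x‖)) := by
        refine integral_mono hi1 (hsum.add (hi2.const_mul _)) fun x => ?_
        have := pointwise_bound (fun β => pd f β x) (fun α β => pd (pd f β) α x) (f x) hq hε
        simp only [u, pd_weighted hf hε]
        exact this
    _ = (n + 2 * q) * ∫ x, (gradSq f x + ε) ^ q * hessNorm f x * ‖f x‖ := by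
        rw [integral_add hsum (hi2.const_mul _), integral_finsetSum _ fun α _ => (hu α).1,
          integral_const_mul]
        simp [(hu _).2]

/-- The case `ε = 0`, obtained by letting `ε → 0⁺`. -/
lemma limit_ineq (hf : ContDiff ℝ (⊤ : ℕ∞) f) (hsupp : HasCompactSupport f) {q : ℝ}
    (hq : 0 ≤ q) :
    ∫ x, gradSq f x ^ q * gradSq f x ≤
      (n + 2 * q) * ∫ x, gradSq f x ^ q * hessNorm f x * ‖f x‖ := by
  have hGc := (contDiff_gradSq hf).continuous
  have hHc := continuous_hessNorm hf
  have hw : Continuous fun z : ℝ × EuclideanSpace ℝ (Fin n) => (gradSq f z.2 + z.1) ^ q :=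
    ((hGc.comp continuous_snd).add continuous_fst).rpow_const fun _ => Or.inr hq
  -- Restricting to the compact set `tsupport f` makes the integrals continuous in `ε`.
  have e1 : ∀ ε : ℝ, ∫ x in tsupport f, (gradSq f x + ε) ^ q * gradSq f x =
      ∫ x, (gradSq f x + ε) ^ q * gradSq f x := fun ε => by
    refine setIntegral_eq_integral_of_forall_compl_eq_zero fun x hx => ?_
    have : fderiv ℝ f x = 0 := by
      by_contra h
      exact hx (support_fderiv_subset ℝ h)
    simp [gradSq, pd, this]
  have e2 : ∀ ε : ℝ, ∫ x in tsupport f, (gradSq f x + ε) ^ q * hessNorm f x * ‖f x‖ =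
      ∫ x, (gradSq f x + ε) ^ q * hessNorm f x * ‖f x‖ := fun ε => by
    refine setIntegral_eq_integral_of_forall_compl_eq_zero fun x hx => ?_
    simp [image_eq_zero_of_notMem_tsupport hx]
  have c1 : Continuous fun ε : ℝ => ∫ x, (gradSq f x + ε) ^ q * gradSq f x := by
    simp only [← e1]
    exact continuous_parametric_integral_of_continuous
      (f := fun (ε : ℝ) x => (gradSq f x + ε) ^ q * gradSq f x)
      (hw.mul (hGc.comp continuous_snd)) hsupp
  have c2 : Continuous fun ε : ℝ => ∫ x, (gradSq f x + ε) ^ q * hessNorm f x * ‖f x‖ := by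
    simp only [← e2]
    exact continuous_parametric_integral_of_continuous
      (f := fun (ε : ℝ) x => (gradSq f x + ε) ^ q * hessNorm f x * ‖f x‖)
      ((hw.mul (hHc.comp continuous_snd)).mul (hf.continuous.norm.comp continuous_snd)) hsupp
  have t1 := (c1.tendsto 0).mono_left (nhdsWithin_le_nhds (s := Set.Ioi 0))
  have t2 := ((c2.const_mul (n + 2 * q)).tendsto 0).mono_left
    (nhdsWithin_le_nhds (s := Set.Ioi 0))
  have := le_of_tendsto_of_tendsto t1 t2
    (eventually_nhdsWithin_of_forall fun ε hε => regularized_ineq hf hsupp hq hε)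
  simpa using this

end Calculus

/-! ### Frobenius norms as sums over partial derivatives -/

lemma sum_inner_single_sq {m : ℕ} (v : EuclideanSpace ℝ (Fin m)) :
    ∑ a, ⟪v, EuclideanSpace.single a (1 : ℝ)⟫ ^ 2 = ‖v‖ ^ 2 := by
  simp [EuclideanSpace.norm_sq_eq, EuclideanSpace.inner_single_right]

lemma frobGrad1_eq {n m : ℕ} (f : EuclideanSpace ℝ (Fin n) → EuclideanSpace ℝ (Fin m))
    (x : EuclideanSpace ℝ (Fin n)) : frobGrad1 f x = Real.sqrt (gradSq f x) := by
  simp only [frobGrad1, gradSq, sum_inner_single_sq, iteratedFDeriv_one_apply, pd]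

lemma frobGrad2_eq {n m : ℕ} {f : EuclideanSpace ℝ (Fin n) → EuclideanSpace ℝ (Fin m)}
    (hf : ContDiff ℝ (⊤ : ℕ∞) f) (x : EuclideanSpace ℝ (Fin n)) :
    frobGrad2 f x = hessNorm f x := by
  have hd : DifferentiableAt ℝ (fderiv ℝ f) x :=
    (hf.fderiv_right (m := (⊤ : ℕ∞)) (by simp)).differentiable (by simp) x
  have key : ∀ α β : Fin n, pd (pd f β) α x = iteratedFDeriv ℝ 2 f x
      ![EuclideanSpace.single α (1:ℝ), EuclideanSpace.single β (1:ℝ)] := fun α β => by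
    have := (hd.hasFDerivAt.clm_apply
      (hasFDerivAt_const (EuclideanSpace.single β (1:ℝ)) x)).fderiv
    rw [pd, iteratedFDeriv_two_apply]
    unfold pd
    rw [this]
    simp
  simp only [frobGrad2, hessNorm, sum_inner_single_sq, key]

/-- **Inequality (4.15) in the proof of Proposition 4.1**: for real `p ≥ 2` and
`f ∈ C_c^∞(ℝⁿ, ℝᵐ)`,
`∫ |∇f|^p dx ≤ (n + p − 2) ∫ |∇f|^{p−2} |∇²f| |f| dx`,
with Frobenius norms of the derivative arrays. -/
theorem stmt6 (n m : ℕ) (hn : 1 ≤ n) (hm : 1 ≤ m) (p : ℝ) (hp : 2 ≤ p)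
    (f : EuclideanSpace ℝ (Fin n) → EuclideanSpace ℝ (Fin m))
    (hf : ContDiff ℝ (⊤ : ℕ∞) f) (hsupp : HasCompactSupport f) :
    ∫ x : EuclideanSpace ℝ (Fin n), frobGrad1 f x ^ p ≤
      ((n : ℝ) + p - 2) *
        ∫ x : EuclideanSpace ℝ (Fin n), frobGrad1 f x ^ (p - 2) * frobGrad2 f x * ‖f x‖ := by
  have key := limit_ineq hf hsupp (q := (p - 2) / 2) (by linarith)
  have h1 : ∀ x, frobGrad1 f x ^ (p - 2) = gradSq f x ^ ((p - 2) / 2) := fun x => by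
    rw [frobGrad1_eq, Real.sqrt_eq_rpow, ← Real.rpow_mul (gradSq_nonneg f x)]
    congr 1
    ring
  have h2 : ∀ x, frobGrad1 f x ^ p = gradSq f x ^ ((p - 2) / 2) * gradSq f x := fun x => by
    have h0 : 0 ≤ frobGrad1 f x := Real.sqrt_nonneg _
    rw [← h1]
    rw [← Real.sq_sqrt (gradSq_nonneg f x), ← frobGrad1_eq, ← Real.rpow_natCast, ← Real.rpow_add_of_nonneg h0 (by linarith) (by simp)]
    congr 1
    push_cast
    ring
  simp only [h1, h2, frobGrad2_eq hf]
  convert key using 2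
  ring
end

section
/- (Inequality (4.17) in the proof of Proposition 4.1: the a = 1/2 interpolation case with explicit constant.) Let n, m ≥ 1, let p ∈ [2,∞), and let q, r ∈ [1,∞] satisfy 1/q + 1/r = 2/p. For every f ∈ C_c^∞(ℝⁿ, ℝᵐ) one has ‖∇f‖_{L^p} ≤ √(n + p − 2) · ‖∇²f‖_{L^q}^{1/2} ‖f‖_{L^r}^{1/2}. -/
/-!
Write `A = Df`, `H = D²f`, `s = p - 2`, with operator norms throughout. The idea is to test with the
vector field `‖A‖ ^ s • A`, weighting the Hilbert–Schmidt pairing of `A` with itself by the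
*operator* norm of `A`. With `eᵢ` the standard basis, `‖A‖² ≤ ∑ᵢ ‖A eᵢ‖²`
(`sq_opNorm_le_sum`), so integrating by parts bounds `∫ ‖A‖ ^ (s + 2)` by
`-∫ ‖A‖ ^ s ⟪f, Δf⟫ - ∫ D(‖A‖ ^ s) (A* f)`.

The first integrand is at most `n ‖f‖ ‖H‖ ‖A‖ ^ s`. For the second, `‖A* f‖ ≤ ‖A‖ ‖f‖`, and
`‖D‖A‖‖ ≤ ‖H‖` wherever `‖A‖` is differentiable (`norm_fderiv_norm_le`), so it is at most
`s ‖f‖ ‖H‖ ‖A‖ ^ s`. Together these give the constant `n + s = n + p - 2`, and Hölder's inequality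
with exponents `r`, `q`, `p / (p - 2)` followed by division by `‖A‖_{L^p} ^ s` concludes.

The operator norm is only Lipschitz and `t ^ s` is singular at `0`, so the argument is run with the
Lipschitz weight `(‖A‖ + δ) ^ s`, using Rademacher's theorem and integration by parts for Lipschitz
functions (`weighted_ineq`); then `δ → 0` (`limit_ineq`).
-/

open MeasureTheory ENNReal

/-! ### Operator norms and Lipschitz weights -/

open Filter Topology in
/-- Wherever it exists, the derivative of `‖A‖` is bounded by that of `A`: compare difference quotients
with the reverse triangle inequality. No smoothness of the norm of `G` is needed. -/
lemma norm_fderiv_norm_le {E G : Type*} [NormedAddCommGroup E] [NormedSpace ℝ E]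
    [NormedAddCommGroup G] [NormedSpace ℝ G] {A : E → G} {x : E} {A' : E →L[ℝ] G}
    {L : E →L[ℝ] ℝ} (hA : HasFDerivAt A A' x) (hL : HasFDerivAt (fun y => ‖A y‖) L x) :
    ‖L‖ ≤ ‖A'‖ := by
  refine L.opNorm_le_bound (norm_nonneg _) fun v => ?_
  refine le_trans ?_ (A'.le_opNorm v)
  refine le_of_tendsto_of_tendsto' (hL.lim_real v).norm (hA.lim_real v).norm fun c => ?_
  rw [norm_smul, norm_smul]
  gcongr
  exact abs_norm_sub_norm_le _ _

/-- The operator norm is at most the Hilbert–Schmidt norm. -/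
lemma sq_opNorm_le_sum {n : ℕ} {F : Type*} [NormedAddCommGroup F] [NormedSpace ℝ F]
    (A : EuclideanSpace ℝ (Fin n) →L[ℝ] F) :
    ‖A‖ ^ 2 ≤ ∑ i, ‖A (EuclideanSpace.single i 1)‖ ^ 2 := by
  have hS : 0 ≤ ∑ i, ‖A (EuclideanSpace.single i 1)‖ ^ 2 := by positivity
  rw [← Real.le_sqrt (norm_nonneg _) hS]
  refine A.opNorm_le_bound (Real.sqrt_nonneg _) fun v => ?_
  have hv : v = ∑ i, v i • EuclideanSpace.single i (1 : ℝ) := by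
    ext j; simp [Finset.sum_apply, Pi.single_apply]
  calc ‖A v‖ = ‖∑ i, v i • A (EuclideanSpace.single i 1)‖ := by
        conv_lhs => rw [hv]
        simp only [map_sum, map_smul]
    _ ≤ ∑ i, ‖A (EuclideanSpace.single i 1)‖ * ‖v i‖ :=
        (norm_sum_le _ _).trans (le_of_eq (Finset.sum_congr rfl fun i _ => by
          rw [norm_smul, mul_comm]))
    _ ≤ _ := by
        rw [EuclideanSpace.norm_eq]
        exact Real.sum_mul_le_sqrt_mul_sqrt _ _ _

/-- The shift by `δ > 0` keeps `g + δ` in a compact interval of positive numbers, on which `t ^ s` is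
Lipschitz. -/
lemma exists_lipschitzWith_weight {E : Type*} [PseudoMetricSpace E] {g : E → ℝ} {C : NNReal}
    (hg : LipschitzWith C g) (hg0 : ∀ x, 0 ≤ g x) {B : ℝ} (hB : ∀ x, g x ≤ B)
    {δ : ℝ} (hδ : 0 < δ) (s : ℝ) : ∃ D, LipschitzWith D fun x => (g x + δ) ^ s := by
  have hne : ∀ t ∈ Set.Icc δ (B + δ), t ≠ 0 := fun t ht => (hδ.trans_le ht.1).ne'
  have hc : ContinuousOn (fun t : ℝ => s * t ^ (s - 1)) (Set.Icc δ (B + δ)) :=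
    continuousOn_const.mul (continuousOn_id.rpow_const fun t ht => Or.inl (hne t ht))
  obtain ⟨M, hM⟩ := isCompact_Icc.exists_bound_of_continuousOn hc
  have hl : LipschitzOnWith M.toNNReal (fun t : ℝ => t ^ s) (Set.Icc δ (B + δ)) := by
    refine (convex_Icc δ (B + δ)).lipschitzOnWith_of_nnnorm_hasDerivWithin_le
      (fun t ht => (Real.hasDerivAt_rpow_const (Or.inl (hne t ht))).hasDerivWithinAt)
      fun t ht => ?_
    rw [← NNReal.coe_le_coe, coe_nnnorm]
    exact (hM t ht).trans (Real.le_coe_toNNReal M)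
  have hgδ : LipschitzWith C fun x => g x + δ :=
    LipschitzWith.of_dist_le_mul fun x y => by simpa using hg.dist_le_mul x y
  refine ⟨M.toNNReal * C, lipschitzOnWith_univ.1 (hl.comp hgδ.lipschitzOnWith fun x _ => ?_)⟩
  exact ⟨by linarith [hg0 x], by linarith [hB x]⟩

/-! ### The integral inequality -/

section

variable {n : ℕ} {F : Type*} [NormedAddCommGroup F] [InnerProductSpace ℝ F]

lemma continuous_norm_hess {f : EuclideanSpace ℝ (Fin n) → F} (hf : ContDiff ℝ 2 f) :
    Continuous fun x => ‖fderiv ℝ (fderiv ℝ f) x‖ :=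
  continuous_norm.comp
    ((hf.fderiv_right (m := 1) (by norm_num)).fderiv_right (m := 0) (by norm_num)).continuous

lemma norm_iteratedFDeriv_two_eq (f : EuclideanSpace ℝ (Fin n) → F)
    (x : EuclideanSpace ℝ (Fin n)) :
    ‖iteratedFDeriv ℝ 2 f x‖ = ‖‖fderiv ℝ (fderiv ℝ f) x‖‖ := by
  have h : ‖iteratedFDeriv ℝ 2 f x‖ = ‖fderiv ℝ (fderiv ℝ f) x‖ := by
    rw [← norm_iteratedFDeriv_fderiv (n := 1), norm_iteratedFDeriv_one]
  rw [← h]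
  exact (Real.norm_of_nonneg (norm_nonneg _)).symm

/-- At a point of differentiability of `‖Df‖`, minus the divergence-type expression produced by the
integration by parts is at most `(n + s) ‖f‖ ‖D²f‖ (‖Df‖ + δ) ^ s`: the Laplacian accounts for `n`,
the derivative of the weight for `s`. -/
lemma pointwise_bound_s7 {f : EuclideanSpace ℝ (Fin n) → F} (hf : ContDiff ℝ 2 f)
    {x : EuclideanSpace ℝ (Fin n)} (hx : DifferentiableAt ℝ (fun y => ‖fderiv ℝ f y‖) x)
    {δ s : ℝ} (hδ : 0 < δ) (hs : 0 ≤ s) :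
    ∑ i, (-((‖fderiv ℝ f x‖ + δ) ^ s *
          inner ℝ (f x) (fderiv ℝ (fderiv ℝ f) x (EuclideanSpace.single i 1)
            (EuclideanSpace.single i 1))) -
        lineDeriv ℝ (fun y => (‖fderiv ℝ f y‖ + δ) ^ s) x (EuclideanSpace.single i 1) *
          inner ℝ (f x) (fderiv ℝ f x (EuclideanSpace.single i 1))) ≤
      (n + s) * (‖f x‖ * ‖fderiv ℝ (fderiv ℝ f) x‖ * (‖fderiv ℝ f x‖ + δ) ^ s) := by
  set A := fderiv ℝ f x with hA
  set H := fderiv ℝ (fderiv ℝ f) x with hH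
  have hpos : 0 < ‖A‖ + δ := by positivity
  have hAd : HasFDerivAt (fderiv ℝ f) H x :=
    ((hf.fderiv_right (m := 1) (by norm_num)).differentiable (by norm_num) x).hasFDerivAt
  obtain ⟨L, hL⟩ := hx
  have hLH : ‖L‖ ≤ ‖H‖ := norm_fderiv_norm_le hAd hL
  have hW : HasFDerivAt (fun y => (‖fderiv ℝ f y‖ + δ) ^ s)
      ((s * (‖A‖ + δ) ^ (s - 1)) • L) x := by
    simpa using (hL.add_const δ).rpow_const (p := s) (Or.inl hpos.ne')
  set e : Fin n → EuclideanSpace ℝ (Fin n) := fun i => EuclideanSpace.single i 1 with he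
  have hen : ∀ i, ‖e i‖ = 1 := fun i => by simp [he]
  -- the adjoint of the derivative applied to `f x`
  set v : EuclideanSpace ℝ (Fin n) := WithLp.toLp 2 fun i => inner ℝ (f x) (A (e i)) with hv
  have hvs : v = ∑ i, inner ℝ (f x) (A (e i)) • e i := by
    ext j; simp [hv, he, Finset.sum_apply, Pi.single_apply]
  have hvn : ‖v‖ ≤ ‖A‖ * ‖f x‖ := by
    have h1 : ‖v‖ ^ 2 = inner ℝ (f x) (A v) := by
      conv_rhs => rw [hvs]
      simp only [map_sum, map_smul, inner_sum, inner_smul_right]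
      rw [EuclideanSpace.norm_sq_eq]
      simp [hv, sq]
    have h2 : ‖v‖ ^ 2 ≤ ‖f x‖ * (‖A‖ * ‖v‖) := by
      rw [h1]
      exact (real_inner_le_norm _ _).trans (by gcongr; exact A.le_opNorm v)
    rcases (norm_nonneg v).eq_or_lt with h0 | h0
    · rw [← h0]; positivity
    · exact le_of_mul_le_mul_right (by linarith) h0
  have hsum : ∑ i, lineDeriv ℝ (fun y => (‖fderiv ℝ f y‖ + δ) ^ s) x (e i) *
      inner ℝ (f x) (A (e i)) = s * (‖A‖ + δ) ^ (s - 1) * L v := by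
    rw [hvs, map_sum, Finset.mul_sum]
    refine Finset.sum_congr rfl fun i _ => ?_
    rw [hW.hasLineDerivAt _ |>.lineDeriv]
    simp; ring
  have hLv : -(s * (‖A‖ + δ) ^ (s - 1) * L v) ≤ s * (‖f x‖ * ‖H‖ * (‖A‖ + δ) ^ s) := by
    have h3 : -(L v) ≤ ‖H‖ * ((‖A‖ + δ) * ‖f x‖) :=
      calc -(L v) ≤ ‖L v‖ := neg_le_abs _
        _ ≤ ‖L‖ * ‖v‖ := L.le_opNorm v
        _ ≤ ‖H‖ * ((‖A‖ + δ) * ‖f x‖) := by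
          gcongr
          exact hvn.trans (by gcongr; linarith)
    have h4 : (‖A‖ + δ) ^ s = (‖A‖ + δ) ^ (s - 1) * (‖A‖ + δ) := by
      rw [← Real.rpow_add_one hpos.ne']; simp
    have h5 : 0 ≤ s * (‖A‖ + δ) ^ (s - 1) := by positivity
    rw [h4]
    nlinarith [mul_le_mul_of_nonneg_left h3 h5]
  have hlap : ∑ i, -((‖A‖ + δ) ^ s * inner ℝ (f x) (H (e i) (e i))) ≤
      n * (‖f x‖ * ‖H‖ * (‖A‖ + δ) ^ s) := by
    have : ∀ i ∈ Finset.univ, -((‖A‖ + δ) ^ s * inner ℝ (f x) (H (e i) (e i))) ≤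
        ‖f x‖ * ‖H‖ * (‖A‖ + δ) ^ s := fun i _ => by
      have h6 : -inner ℝ (f x) (H (e i) (e i)) ≤ ‖f x‖ * ‖H‖ :=
        calc -inner ℝ (f x) (H (e i) (e i)) ≤ |inner ℝ (f x) (H (e i) (e i))| := neg_le_abs _
          _ ≤ ‖f x‖ * ‖H (e i) (e i)‖ := abs_real_inner_le_norm _ _
          _ ≤ ‖f x‖ * ‖H‖ := by
            gcongr
            simpa [hen] using H.le_opNorm₂ (e i) (e i)
      have h7 : 0 ≤ (‖A‖ + δ) ^ s := by positivity
      nlinarith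
    simpa using Finset.sum_le_sum this
  rw [Finset.sum_sub_distrib, hsum]
  linarith

/-- The integral inequality with the regularised weight, by integrating by parts against the Lipschitz
function `(‖Df‖ + δ) ^ s`. -/
lemma weighted_ineq {f : EuclideanSpace ℝ (Fin n) → F} (hf : ContDiff ℝ 2 f)
    (hc : HasCompactSupport f) {δ s : ℝ} (hδ : 0 < δ) (hs : 0 ≤ s) :
    ∫ x, (‖fderiv ℝ f x‖ + δ) ^ s * ‖fderiv ℝ f x‖ ^ 2 ≤
      (n + s) * ∫ x, ‖f x‖ * ‖fderiv ℝ (fderiv ℝ f) x‖ * (‖fderiv ℝ f x‖ + δ) ^ s := by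
  have hA1 : ContDiff ℝ 1 (fderiv ℝ f) := hf.fderiv_right (by norm_num)
  have hAc : HasCompactSupport (fderiv ℝ f) := hc.fderiv ℝ
  have hH0 : Continuous (fderiv ℝ (fderiv ℝ f)) := hA1.continuous_fderiv (by norm_num)
  obtain ⟨C, hC⟩ := ContDiff.lipschitzWith_of_hasCompactSupport hAc hA1 (by norm_num)
  have hg : LipschitzWith C fun x => ‖fderiv ℝ f x‖ := by
    simpa [Function.comp_def] using lipschitzWith_one_norm.comp hC
  obtain ⟨B, hB⟩ := hAc.exists_bound_of_continuous hA1.continuous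
  obtain ⟨D, hD⟩ := exists_lipschitzWith_weight hg (fun x => norm_nonneg _) hB hδ s
  set W : EuclideanSpace ℝ (Fin n) → ℝ := fun x => (‖fderiv ℝ f x‖ + δ) ^ s with hWdef
  have hWc : Continuous W := hD.continuous
  have hW0 : ∀ x, 0 ≤ W x := fun x => by positivity
  set e : Fin n → EuclideanSpace ℝ (Fin n) := fun i => EuclideanSpace.single i 1 with he
  set h : Fin n → EuclideanSpace ℝ (Fin n) → ℝ :=
    fun i x => inner ℝ (f x) (fderiv ℝ f x (e i)) with hhdef
  have hh1 : ∀ i, ContDiff ℝ 1 (h i) := fun i =>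
    (hf.of_le (by norm_num)).inner ℝ (hA1.clm_apply contDiff_const)
  have hhc : ∀ i, HasCompactSupport (h i) := fun i =>
    hc.mono' fun x hx => subset_tsupport f (by
      contrapose! hx
      simp only [Function.mem_support, not_not] at hx ⊢
      simp [hhdef, hx])
  have hhd : ∀ i x, lineDeriv ℝ (h i) x (-e i) =
      -(‖fderiv ℝ f x (e i)‖ ^ 2 + inner ℝ (f x) (fderiv ℝ (fderiv ℝ f) x (e i) (e i))) := by
    intro i x
    have h1 : HasFDerivAt f (fderiv ℝ f x) x :=
      (hf.differentiable (by norm_num) x).hasFDerivAt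
    have h2 : HasFDerivAt (fun y => fderiv ℝ f y (e i))
        ((fderiv ℝ (fderiv ℝ f) x).flip (e i)) x := by
      simpa using ((hA1.differentiable (by norm_num) x).hasFDerivAt).clm_apply
        (hasFDerivAt_const (e i) x)
    rw [((h1.inner ℝ h2).hasLineDerivAt _).lineDeriv]
    simp [fderivInnerCLM_apply, add_comm]
  have i1 : ∀ i, Integrable fun x => W x * ‖fderiv ℝ f x (e i)‖ ^ 2 := by
    intro i
    refine Continuous.integrable_of_hasCompactSupport ?_ ?_
    · exact hWc.mul ((hA1.continuous.clm_apply continuous_const).norm.pow 2)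
    · exact hAc.mono fun x hx => by
        contrapose! hx
        simp only [Function.mem_support, not_not] at hx ⊢
        simp [hx]
  have i2 : ∀ i, Integrable fun x =>
      W x * inner ℝ (f x) (fderiv ℝ (fderiv ℝ f) x (e i) (e i)) := by
    intro i
    refine Continuous.integrable_of_hasCompactSupport ?_ ?_
    · exact hWc.mul (hf.continuous.inner
        ((hH0.clm_apply continuous_const).clm_apply continuous_const))
    · exact hc.mono fun x hx => by
        contrapose! hx
        simp only [Function.mem_support, not_not] at hx ⊢
        simp [hx]
  have i3 : ∀ i, Integrable fun x => lineDeriv ℝ W x (e i) * h i x := fun i =>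
    ((hh1 i).continuous.integrable_of_hasCompactSupport (hhc i)).bdd_mul
      (hD.memLp_lineDeriv (μ := volume) (e i)).aestronglyMeasurable
      (.of_forall fun x => norm_lineDeriv_le_of_lipschitz ℝ hD)
  have i2n : ∀ i, Integrable fun x =>
      -(W x * inner ℝ (f x) (fderiv ℝ (fderiv ℝ f) x (e i) (e i))) := fun i => (i2 i).neg
  have i4 : ∀ i, Integrable fun x =>
      -(W x * inner ℝ (f x) (fderiv ℝ (fderiv ℝ f) x (e i) (e i))) -
        lineDeriv ℝ W x (e i) * h i x := fun i => (i2n i).sub (i3 i)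
  have hibp : ∀ i, ∫ x, W x * ‖fderiv ℝ f x (e i)‖ ^ 2 =
      ∫ x, (-(W x * inner ℝ (f x) (fderiv ℝ (fderiv ℝ f) x (e i) (e i))) -
        lineDeriv ℝ W x (e i) * h i x) := by
    intro i
    obtain ⟨K, hK⟩ := ContDiff.lipschitzWith_of_hasCompactSupport (hhc i) (hh1 i) (by norm_num)
    have key := LipschitzWith.integral_lineDeriv_mul_eq (μ := volume) hD hK (hhc i) (e i)
    simp only [hhd] at key
    rw [integral_sub (i2n i) (i3 i), key, integral_neg, ← sub_eq_zero]
    have : ∫ x, -(‖fderiv ℝ f x (e i)‖ ^ 2 +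
        inner ℝ (f x) (fderiv ℝ (fderiv ℝ f) x (e i) (e i))) * W x =
        -(∫ x, W x * ‖fderiv ℝ f x (e i)‖ ^ 2) -
          ∫ x, W x * inner ℝ (f x) (fderiv ℝ (fderiv ℝ f) x (e i) (e i)) := by
      have i1n : Integrable fun x => -(W x * ‖fderiv ℝ f x (e i)‖ ^ 2) := (i1 i).neg
      rw [← integral_neg, ← integral_sub i1n (i2 i)]
      congr 1; ext x; ring
    rw [this]; ring
  have hIL : Integrable fun x => W x * ‖fderiv ℝ f x‖ ^ 2 :=
    Continuous.integrable_of_hasCompactSupport (hWc.mul (hA1.continuous.norm.pow 2))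
      (hAc.mono fun x hx => by
        contrapose! hx
        simp only [Function.mem_support, not_not] at hx ⊢
        simp [hx])
  have hIR : Integrable fun x => ‖f x‖ * ‖fderiv ℝ (fderiv ℝ f) x‖ * W x :=
    Continuous.integrable_of_hasCompactSupport
      ((hf.continuous.norm.mul (continuous_norm_hess hf)).mul hWc)
      (hc.mono fun x hx => by
        contrapose! hx
        simp only [Function.mem_support, not_not] at hx ⊢
        simp [hx])
  calc ∫ x, W x * ‖fderiv ℝ f x‖ ^ 2
      ≤ ∫ x, ∑ i, W x * ‖fderiv ℝ f x (e i)‖ ^ 2 := by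
        refine integral_mono hIL (integrable_finsetSum _ fun i _ => i1 i) fun x => ?_
        simp only [← Finset.mul_sum]
        exact mul_le_mul_of_nonneg_left (sq_opNorm_le_sum _) (hW0 x)
    _ = ∫ x, ∑ i, (-(W x * inner ℝ (f x) (fderiv ℝ (fderiv ℝ f) x (e i) (e i))) -
          lineDeriv ℝ W x (e i) * h i x) := by
        rw [integral_finsetSum _ fun i _ => i1 i,
          integral_finsetSum _ fun i _ => i4 i]
        exact Finset.sum_congr rfl fun i _ => hibp i
    _ ≤ ∫ x, (n + s) * (‖f x‖ * ‖fderiv ℝ (fderiv ℝ f) x‖ * W x) := by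
        refine integral_mono_ae (integrable_finsetSum _ fun i _ => i4 i)
          (hIR.const_mul _) ?_
        -- Rademacher: `‖Df‖` is Lipschitz, hence differentiable almost everywhere
        filter_upwards [hg.ae_differentiableAt (μ := volume)] with x hx
        exact pointwise_bound_s7 hf hx hδ hs
    _ = _ := integral_const_mul _ _

open Filter Topology in
/-- The integral inequality without regularisation; both sides of `weighted_ineq` are continuous in `δ`
up to `δ = 0` because `s ≥ 0`. -/
lemma limit_ineq_s7 {f : EuclideanSpace ℝ (Fin n) → F} (hf : ContDiff ℝ 2 f)
    (hc : HasCompactSupport f) {s : ℝ} (hs : 0 ≤ s) :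
    ∫ x, ‖fderiv ℝ f x‖ ^ (s + 2) ≤
      (n + s) * ∫ x, ‖f x‖ * ‖fderiv ℝ (fderiv ℝ f) x‖ * ‖fderiv ℝ f x‖ ^ s := by
  have hA1 : ContDiff ℝ 1 (fderiv ℝ f) := hf.fderiv_right (by norm_num)
  have hAc : HasCompactSupport (fderiv ℝ f) := hc.fderiv ℝ
  have hA0 : Continuous (fderiv ℝ f) := hA1.continuous
  have hH0 : Continuous (fderiv ℝ (fderiv ℝ f)) := hA1.continuous_fderiv (by norm_num)
  have hWc : Continuous fun z : ℝ × EuclideanSpace ℝ (Fin n) =>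
      (‖fderiv ℝ f z.2‖ + z.1) ^ s :=
    ((hA0.comp continuous_snd).norm.add continuous_fst).rpow_const fun _ => Or.inr hs
  have cL : Continuous fun δ : ℝ => ∫ x, (‖fderiv ℝ f x‖ + δ) ^ s * ‖fderiv ℝ f x‖ ^ 2 := by
    rw [← continuousOn_univ]
    refine continuousOn_integral_of_compact_support hAc ?_ fun δ x _ hx => ?_
    · exact (hWc.mul ((hA0.comp continuous_snd).norm.pow 2)).continuousOn
    · simp [image_eq_zero_of_notMem_tsupport hx]
  have cR : Continuous fun δ : ℝ =>
      ∫ x, ‖f x‖ * ‖fderiv ℝ (fderiv ℝ f) x‖ * (‖fderiv ℝ f x‖ + δ) ^ s := by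
    rw [← continuousOn_univ]
    refine continuousOn_integral_of_compact_support hc ?_ fun δ x _ hx => ?_
    · exact (((hf.continuous.comp continuous_snd).norm.mul
        ((continuous_norm_hess hf).comp continuous_snd)).mul hWc).continuousOn
    · simp [image_eq_zero_of_notMem_tsupport hx]
  have tL := (cL.tendsto 0).mono_left (nhdsWithin_le_nhds (s := Set.Ioi 0))
  have tR := ((cR.tendsto 0).mono_left (nhdsWithin_le_nhds (s := Set.Ioi 0))).const_mul (n + s)
  have := le_of_tendsto_of_tendsto tL tR (by
    filter_upwards [self_mem_nhdsWithin] with δ hδ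
    exact weighted_ineq hf hc hδ hs)
  simp only [add_zero] at this
  refine le_trans (le_of_eq ?_) this
  congr 1; ext x
  rw [Real.rpow_add_of_nonneg (norm_nonneg _) hs (by norm_num), Real.rpow_two]

/-! ### Hölder's inequality and conclusion -/

/-- Hölder's inequality with exponents `r`, `q` and `(s + 2) / s`; for `s = 0` the third factor is
absent. -/
lemma holder_step {f : EuclideanSpace ℝ (Fin n) → F} (hf : ContDiff ℝ 2 f)
    {s : ℝ} (hs : 0 ≤ s) {q r : ℝ≥0∞} (hrel : r⁻¹ + q⁻¹ = 2 / ENNReal.ofReal (s + 2)) :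
    eLpNorm (fun x => ‖f x‖ * ‖fderiv ℝ (fderiv ℝ f) x‖ * ‖fderiv ℝ f x‖ ^ s) 1 volume ≤
      eLpNorm f r volume * eLpNorm (fun x => ‖fderiv ℝ (fderiv ℝ f) x‖) q volume *
        eLpNorm (fderiv ℝ f) (ENNReal.ofReal (s + 2)) volume ^ s := by
  have hA1 : ContDiff ℝ 1 (fderiv ℝ f) := hf.fderiv_right (by norm_num)
  have hA0 : Continuous (fderiv ℝ f) := hA1.continuous
  have hH0 : Continuous (fderiv ℝ (fderiv ℝ f)) := hA1.continuous_fderiv (by norm_num)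
  have m1 : AEStronglyMeasurable (fun x => ‖f x‖) volume :=
    hf.continuous.norm.aestronglyMeasurable
  have m2 : AEStronglyMeasurable (fun x => ‖fderiv ℝ (fderiv ℝ f) x‖) volume :=
    (continuous_norm_hess hf).aestronglyMeasurable
  have m3 : AEStronglyMeasurable (fun x => ‖fderiv ℝ f x‖ ^ s) volume :=
    (hA0.norm.rpow_const fun _ => Or.inr hs).aestronglyMeasurable
  have t1 : HolderTriple r q (ENNReal.ofReal (s + 2) / 2) :=
    ⟨by rw [hrel, ENNReal.inv_div (by simp) (by simp)]⟩
  have h1 := eLpNorm_smul_le_mul_eLpNorm (p := r) (q := q)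
    (r := ENNReal.ofReal (s + 2) / 2) m2 m1
  rw [eLpNorm_norm] at h1
  rcases hs.eq_or_lt with rfl | hs
  · simpa [ENNReal.div_self, Pi.mul_def] using h1
  have t2 : HolderTriple (ENNReal.ofReal (s + 2) / 2)
      (ENNReal.ofReal (s + 2) / ENNReal.ofReal s) 1 := by
    refine ⟨?_⟩
    have hs0 : ENNReal.ofReal s ≠ 0 := by simpa using hs
    rw [ENNReal.inv_div (by simp) (by simp), ENNReal.inv_div (by simp) (Or.inl hs0),
      ← ENNReal.add_div, inv_one, ENNReal.ofReal_add hs.le (by norm_num)]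
    rw [add_comm, show ENNReal.ofReal 2 = 2 by simp]
    exact ENNReal.div_self (by simp) (by simp)
  have h2 := eLpNorm_smul_le_mul_eLpNorm (p := ENNReal.ofReal (s + 2) / 2)
    (q := ENNReal.ofReal (s + 2) / ENNReal.ofReal s) (r := 1) m3 (m1.smul m2)
  rw [eLpNorm_norm_rpow _ hs, ENNReal.div_mul_cancel (by simpa using hs) (by simp)] at h2
  exact h2.trans (mul_le_mul_left h1 _)

/-- `limit_ineq` restated with `L^p` seminorms. -/
lemma eLpNorm_fderiv_rpow_le {f : EuclideanSpace ℝ (Fin n) → F} (hf2 : ContDiff ℝ 2 f)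
  (hsupp : HasCompactSupport f) {s : ℝ} (hs : 0 ≤ s) :
    eLpNorm (fderiv ℝ f) (ENNReal.ofReal (s + 2)) volume ^ (s + 2) ≤
    ENNReal.ofReal (n + s) *
      eLpNorm (fun x => ‖f x‖ * ‖fderiv ℝ (fderiv ℝ f) x‖ * ‖fderiv ℝ f x‖ ^ s) 1 volume := by
  have hA1 : ContDiff ℝ 1 (fderiv ℝ f) := hf2.fderiv_right (by norm_num)
  have hAc : HasCompactSupport (fderiv ℝ f) := hsupp.fderiv ℝ
  have iL : Integrable fun x => ‖fderiv ℝ f x‖ ^ (s + 2) :=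
    (hA1.continuous.norm.rpow_const fun _ => Or.inr (by linarith)).integrable_of_hasCompactSupport
      (hAc.mono fun x hx => by
        contrapose! hx
        simp only [Function.mem_support, not_not] at hx ⊢
        simp [hx, Real.zero_rpow (by linarith : s + 2 ≠ 0)])
  have iR : Integrable fun x => ‖f x‖ * ‖fderiv ℝ (fderiv ℝ f) x‖ * ‖fderiv ℝ f x‖ ^ s :=
    ((hf2.continuous.norm.mul (continuous_norm_hess hf2)).mul
      (hA1.continuous.norm.rpow_const fun _ => Or.inr hs)).integrable_of_hasCompactSupport
      (hsupp.mono fun x hx => by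
        contrapose! hx
        simp only [Function.mem_support, not_not] at hx ⊢
        simp [hx])
  have key := ENNReal.ofReal_le_ofReal (limit_ineq_s7 hf2 hsupp hs)
  rw [ENNReal.ofReal_mul (by positivity),
    ofReal_integral_eq_lintegral_ofReal iL (.of_forall fun x => by positivity),
    ofReal_integral_eq_lintegral_ofReal iR (.of_forall fun x => by positivity)] at key
  rw [eLpNorm_eq_lintegral_rpow_enorm_toReal (by simp; linarith) (by simp),
    ENNReal.toReal_ofReal (by linarith), ← ENNReal.rpow_mul,
    one_div_mul_cancel (by linarith), ENNReal.rpow_one, eLpNorm_one_eq_lintegral_enorm]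
  convert key using 3 with x
  · rw [← ofReal_norm, ENNReal.ofReal_rpow_of_nonneg (norm_nonneg _) (by linarith)]
  · ext x
    rw [← ofReal_norm, Real.norm_of_nonneg (by positivity)]

/-- The finite factor `X ^ s` is cancelled and a square root taken. -/
lemma root_step (n : ℕ) {s : ℝ} (hs : 0 ≤ s) {X K R : ℝ≥0∞} (hX : X ≠ ∞)
    (hH : X ^ (s + 2) ≤ ENNReal.ofReal (n + s) * (R * K * X ^ s)) :
    X ≤ ENNReal.ofReal (Real.sqrt ((n : ℝ) + (s + 2) - 2)) *
      K ^ (1/2 : ℝ) * R ^ (1/2 : ℝ) := by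
  have hXsq : X ^ (2 : ℝ) ≤ ENNReal.ofReal (n + s) * K * R := by
    rcases eq_or_ne X 0 with h0 | h0
    · simp [h0]
    have hXs0 : X ^ s ≠ 0 := by simp [ENNReal.rpow_eq_zero_iff, h0, hX]
    have hXs : X ^ s ≠ ∞ := ENNReal.rpow_ne_top_of_nonneg hs hX
    rw [ENNReal.rpow_add _ _ h0 hX] at hH
    rw [← ENNReal.mul_le_mul_iff_right hXs0 hXs]
    refine hH.trans (le_of_eq ?_)
    ring
  have hroot := ENNReal.rpow_le_rpow hXsq (by norm_num : (0 : ℝ) ≤ 1 / 2)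
  rw [← ENNReal.rpow_mul, ENNReal.mul_rpow_of_nonneg _ _ (by norm_num),
    ENNReal.mul_rpow_of_nonneg _ _ (by norm_num),
    ENNReal.ofReal_rpow_of_nonneg (by positivity) (by norm_num), ← Real.sqrt_eq_rpow] at hroot
  simpa [add_sub_assoc] using hroot

end

/-- **Inequality (4.17) in the proof of Proposition 4.1** (the `a = 1/2`
interpolation case with explicit constant): for `p ∈ [2,∞)` and `q, r ∈ [1,∞]`
with `1/q + 1/r = 2/p`, every `f ∈ C_c^∞(ℝⁿ, ℝᵐ)` satisfies
`‖∇f‖_{L^p} ≤ √(n + p − 2) ‖∇²f‖_{L^q}^{1/2} ‖f‖_{L^r}^{1/2}`. -/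
theorem stmt7 (n m : ℕ) (hn : 1 ≤ n) (hm : 1 ≤ m) (p : ℝ) (hp : 2 ≤ p)
    (q r : ℝ≥0∞) (hq : 1 ≤ q) (hr : 1 ≤ r)
    (hrel : (1/q).toReal + (1/r).toReal = 2/p)
    (f : EuclideanSpace ℝ (Fin n) → EuclideanSpace ℝ (Fin m))
    (hf : ContDiff ℝ (⊤ : ℕ∞) f) (hsupp : HasCompactSupport f) :
    eLpNorm (iteratedFDeriv ℝ 1 f) (ENNReal.ofReal p) volume ≤
      ENNReal.ofReal (Real.sqrt ((n : ℝ) + p - 2)) *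
        eLpNorm (iteratedFDeriv ℝ 2 f) q volume ^ (1/2 : ℝ) *
          eLpNorm f r volume ^ (1/2 : ℝ) := by
  have hf2 : ContDiff ℝ 2 f := contDiff_infty.1 hf 2
  have hA1 : ContDiff ℝ 1 (fderiv ℝ f) := hf2.fderiv_right (by norm_num)
  have hH0 : Continuous (fderiv ℝ (fderiv ℝ f)) := hA1.continuous_fderiv (by norm_num)
  have hAc : HasCompactSupport (fderiv ℝ f) := hsupp.fderiv ℝ
  obtain ⟨s, hs, rfl⟩ : ∃ s : ℝ, 0 ≤ s ∧ p = s + 2 := ⟨p - 2, by linarith, by ring⟩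
  have e1 : eLpNorm (iteratedFDeriv ℝ 1 f) (ENNReal.ofReal (s + 2)) volume =
      eLpNorm (fderiv ℝ f) (ENNReal.ofReal (s + 2)) volume :=
    eLpNorm_congr_norm_ae (.of_forall fun x => norm_iteratedFDeriv_one f)
  have e2 : eLpNorm (iteratedFDeriv ℝ 2 f) q volume =
      eLpNorm (fun x => ‖fderiv ℝ (fderiv ℝ f) x‖) q volume :=
    eLpNorm_congr_norm_ae (.of_forall fun x => norm_iteratedFDeriv_two_eq f x)
  have hrel' : r⁻¹ + q⁻¹ = 2 / ENNReal.ofReal (s + 2) := by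
    have hq' : q⁻¹ ≠ ∞ := by simpa using (zero_lt_one.trans_le hq).ne'
    have hr' : r⁻¹ ≠ ∞ := by simpa using (zero_lt_one.trans_le hr).ne'
    rw [one_div, one_div, ← ENNReal.toReal_add hq' hr'] at hrel
    rw [add_comm, ← ENNReal.ofReal_toReal (ENNReal.add_ne_top.2 ⟨hq', hr'⟩), hrel,
      ENNReal.ofReal_div_of_pos (by linarith)]
    simp
  have hX : eLpNorm (fderiv ℝ f) (ENNReal.ofReal (s + 2)) volume ≠ ∞ :=
    (hA1.continuous.memLp_of_hasCompactSupport hAc).eLpNorm_ne_top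
  have hH := (eLpNorm_fderiv_rpow_le hf2 hsupp hs).trans
    (mul_le_mul_right (holder_step hf2 hs hrel') _)
  rw [e1, e2]
  exact root_step n hs hX hH
end

section
/- (Abstract form of the uniform energy estimate, Corollary 5.8.) Let C₀ > 0, let M ≥ 1 be a real number, let T > 0, and let E : [0,T] → ℝ be a nonnegative differentiable function satisfying E'(t) ≤ C₀ E(t)(1 + E(t)^M) for all t ∈ [0,T]. Then for every t ∈ [0,T] with C₀ M t ≤ 1/8 and 4 C₀ M t · E(0)^M ≤ 1/2 one has E(t)^M ≤ 2(1 + 4 C₀ M t) E(0)^M; in particular E(t) ≤ 3^{1/M} E(0) ≤ 3 E(0). -/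
/-!
Put `F = E ^ M` and `a = C₀ M`.  The hypothesis gives the logistic inequality
`F' = M E ^ (M - 1) E' ≤ a F (1 + F)`, so `e ^ (-a s) F / (1 + F)` is nonincreasing
(`antitoneOn_logistic`).  Comparing the endpoints, and using `e ^ (a t) - 1 ≤ 2 a t` for
`a t ≤ 1`, yields `F t (1 - 2 a t F 0) ≤ (1 + 2 a t) F 0`; the smallness assumptions make the
factor on the left at least `3 / 4` (`logistic_bound`).  Working with `F / (1 + F)` rather than
with `1 / F` avoids a separate treatment of the zeros of `E`.
-/

/-- A nonnegative subsolution `F` of the logistic equation `F' = a F (1 + F)` has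
`F / (1 + F)` growing at most like `e ^ (a s)`, since `(F / (1 + F))' = F' / (1 + F) ^ 2`. -/
lemma antitoneOn_logistic {a T : ℝ} {F F' : ℝ → ℝ}
    (hF : ∀ s ∈ Set.Icc (0:ℝ) T, 0 ≤ F s)
    (hd : ∀ s ∈ Set.Icc (0:ℝ) T, HasDerivAt F (F' s) s)
    (hi : ∀ s ∈ Set.Icc (0:ℝ) T, F' s ≤ a * F s * (1 + F s)) :
    AntitoneOn (fun s => F s / (1 + F s) * Real.exp (-(a * s))) (Set.Icc 0 T) := by
  have key : ∀ s ∈ Set.Icc (0:ℝ) T,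
      HasDerivAt (fun s => F s / (1 + F s) * Real.exp (-(a * s)))
        ((F' s - a * F s * (1 + F s)) / (1 + F s) ^ 2 * Real.exp (-(a * s))) s := by
    intro s hs
    have h1 : 1 + F s ≠ 0 := by linarith [hF s hs]
    have h2 := ((hd s hs).div ((hd s hs).const_add 1) h1).mul
      (((hasDerivAt_id s).const_mul a).neg.exp)
    refine h2.congr_deriv ?_
    simp only [id, Pi.div_apply, Pi.neg_apply]
    field_simp
    ring
  refine antitoneOn_of_deriv_nonpos (convex_Icc 0 T)
    (fun s hs => (key s hs).continuousAt.continuousWithinAt)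
    (fun s hs => (key s (interior_subset hs)).differentiableAt.differentiableWithinAt) ?_
  intro s hs
  have hs := interior_subset hs
  rw [(key s hs).deriv]
  refine mul_nonpos_of_nonpos_of_nonneg ?_ (Real.exp_pos _).le
  exact div_nonpos_of_nonpos_of_nonneg (by linarith [hi s hs]) (sq_nonneg _)

/-- The endpoint comparison of `antitoneOn_logistic`, solved for the later value `f`; here `x`
stands for `a t`. -/
lemma logistic_bound {x f f₀ : ℝ} (hx : 0 ≤ x) (hf : 0 ≤ f) (hf₀ : 0 ≤ f₀)
    (hx8 : x ≤ 1 / 8) (hxf : 4 * x * f₀ ≤ 1 / 2)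
    (h : f / (1 + f) * Real.exp (-x) ≤ f₀ / (1 + f₀)) :
    f ≤ 2 * (1 + 4 * x) * f₀ := by
  have he : Real.exp x ≤ 1 + 2 * x := by
    have h1 := Real.abs_exp_sub_one_le (x := x) (by rw [abs_of_nonneg hx]; linarith)
    rw [abs_of_nonneg hx] at h1
    linarith [le_abs_self (Real.exp x - 1)]
  have h1 : f / (1 + f) ≤ f₀ * Real.exp x / (1 + f₀) := by
    have := mul_le_mul_of_nonneg_right h (Real.exp_pos x).le
    rwa [mul_assoc, ← Real.exp_add, neg_add_cancel, Real.exp_zero, mul_one,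
      div_mul_eq_mul_div] at this
  rw [div_le_div_iff₀ (by linarith) (by linarith)] at h1
  have h2 : f₀ * Real.exp x * (1 + f) ≤ f₀ * (1 + 2 * x) * (1 + f) := by gcongr
  have h3 : f * (4 * x * f₀) ≤ f * (1 / 2) := by gcongr
  nlinarith [mul_nonneg hx hf₀]


/-- **Abstract form of the uniform energy estimate (Corollary 5.8)**: if
`E : [0,T] → ℝ` is nonnegative, differentiable, and satisfies
`E' ≤ C₀ E (1 + E^M)` with `M ≥ 1`, then for `t ∈ [0,T]` with `C₀ M t ≤ 1/8` and
`4 C₀ M t E(0)^M ≤ 1/2` one has `E(t)^M ≤ 2 (1 + 4 C₀ M t) E(0)^M`; in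
particular `E(t) ≤ 3^{1/M} E(0) ≤ 3 E(0)`. -/
theorem stmt14 (C₀ M T : ℝ) (hC₀ : 0 < C₀) (hM : 1 ≤ M) (hT : 0 < T)
    (E E' : ℝ → ℝ)
    (hE0 : ∀ t ∈ Set.Icc (0:ℝ) T, 0 ≤ E t)
    (hderiv : ∀ t ∈ Set.Icc (0:ℝ) T, HasDerivAt E (E' t) t)
    (hineq : ∀ t ∈ Set.Icc (0:ℝ) T, E' t ≤ C₀ * E t * (1 + E t ^ M)) :
    ∀ t ∈ Set.Icc (0:ℝ) T, C₀ * M * t ≤ 1/8 → 4 * C₀ * M * t * E 0 ^ M ≤ 1/2 →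
      E t ^ M ≤ 2 * (1 + 4 * C₀ * M * t) * E 0 ^ M ∧
      E t ≤ 3 ^ (1/M) * E 0 ∧ (3:ℝ) ^ (1/M) * E 0 ≤ 3 * E 0 := by
  intro t ht hsmall hsmall'
  have hMpos : 0 < M := by linarith
  have h0 : (0:ℝ) ∈ Set.Icc (0:ℝ) T := ⟨le_rfl, hT.le⟩
  have hE₀ := hE0 0 h0
  have hEt := hE0 t ht
  have hanti := antitoneOn_logistic (a := C₀ * M) (F := fun s => E s ^ M)
    (F' := fun s => E' s * M * E s ^ (M - 1))
    (fun s hs => Real.rpow_nonneg (hE0 s hs) M)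
    -- `M ≥ 1` is what makes `E ^ M` differentiable where `E` vanishes.
    (fun s hs => (hderiv s hs).rpow_const (Or.inr hM))
    (by
      intro s hs
      have hEs := hE0 s hs
      have hpow : E s ^ M = E s * E s ^ (M - 1) := by
        have := Real.rpow_add_of_nonneg hEs zero_le_one (sub_nonneg.2 hM)
        rwa [add_sub_cancel, Real.rpow_one] at this
      calc E' s * M * E s ^ (M - 1)
          ≤ (C₀ * E s * (1 + E s ^ M)) * M * E s ^ (M - 1) := by
            have := hineq s hs
            have := Real.rpow_nonneg hEs (M - 1)
            gcongr
        _ = C₀ * M * (E s * E s ^ (M - 1)) * (1 + E s ^ M) := by ring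
        _ = C₀ * M * E s ^ M * (1 + E s ^ M) := by rw [← hpow])
  have hle := hanti h0 ht ht.1
  simp only [mul_zero, neg_zero, Real.exp_zero, mul_one] at hle
  have hF₀ : 0 ≤ E 0 ^ M := Real.rpow_nonneg hE₀ M
  have hx : 0 ≤ C₀ * M * t := mul_nonneg (mul_nonneg hC₀.le hMpos.le) ht.1
  have hmain := logistic_bound hx (Real.rpow_nonneg hEt M) hF₀ hsmall (by linarith) hle
  refine ⟨by linarith, ?_, ?_⟩
  · have h3 : E t ^ M ≤ 3 * E 0 ^ M :=
      hmain.trans (mul_le_mul_of_nonneg_right (by linarith) hF₀)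
    have h4 := Real.rpow_le_rpow (Real.rpow_nonneg hEt M) h3 (one_div_pos.2 hMpos).le
    rwa [Real.mul_rpow (by norm_num) hF₀, one_div, Real.rpow_rpow_inv hEt hMpos.ne',
      Real.rpow_rpow_inv hE₀ hMpos.ne', ← one_div] at h4
  · refine mul_le_mul_of_nonneg_right ?_ hE₀
    exact Real.rpow_le_self_of_one_le (by norm_num) ((div_le_one hMpos).2 hM)
end
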